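/- Let λ > 0. For every β > 4π, the supremum of ∫_{ℝ×𝕊¹} (e^{β|u|²} − 1) dw dθ over all complex-valued u ∈ C_0^∞(ℝ × 𝕊¹) (or, more generally, in the form domain) satisfying ∫_{ℝ×𝕊¹} (|∂_w u|² + |∂_θ u|² + λ|u|²) dw dθ ≤ 1 is infinite; i.e., the constant 4π in the Trudinger–Moser inequality on the cylinder is sharp. -/

import Mathlib

/-!
The proof uses a smooth version of Moser's sequence, centred at the origin of the cylinder.

Let `q (w, θ) = w² + 2 - 2 cos θ`, a smooth `2π`-periodic substitute for the squared distance to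
the origin, which satisfies `|∇q|² ≤ 4 q` and `q ≤ w² + θ²`.  Let `φ` be a smooth function with
`φ = 0` on `(-∞, 0]`, `0 ≤ φ' ≤ 1` and `t - 1 ≤ φ t`.  For `0 < ε ≤ 1` consider
`v = φ (-log (q + ε))`, a smooth truncation of the logarithm which vanishes for `|w| ≥ 1`.

* Upper bound for the energy.  Pointwise `|∇v|² ≤ 4 q / (q + ε)² ≤ 4 / (q + ε)`, while
  `λ v² ≤ δ / (q + ε) + 64 λ² / δ` because `log²` grows more slowly than any power.  The integral
  of `1 / (q + ε)` is at most `π (log (1/ε) + log 25 + π)` (`integral_kernel_le`): integrating in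
  `w` gives at most `π / √(4 sin² (θ/2) + ε)`, and `θ ↦ cos (θ/2) / √(4 sin² (θ/2) + ε)` has the
  primitive `arsinh (2 sin (θ/2) / √ε)`.  Hence the energy of `v` is at most `A L + K`, where
  `L = log (1/ε)`, `A = (4 + δ) π`, and `K` does not depend on `ε`.
* Lower bound for the exponential integral.  On the square `|w|, |θ| ≤ √(ε/2)`, of area `2 ε`, one
  has `q ≤ ε`, so `v ≥ L - 2`.

After normalising the energy, the exponential integral is at least
`2 e^{-L} (exp (β (L - 2)² / (A L + K)) - 1)`.  When `β > 4π`, one can choose `δ > 0` with `A < β`,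
and this lower bound tends to infinity with `L` (`exists_large`).
-/

open MeasureTheory Real

/-! ### The truncation profile -/

/-- The primitive of the smooth transition function: a smooth approximation of `max t 0`. -/
noncomputable def profile (t : ℝ) : ℝ := ∫ x in (0 : ℝ)..t, smoothTransition x

lemma hasDerivAt_profile (t : ℝ) : HasDerivAt profile (smoothTransition t) t :=
  intervalIntegral.integral_hasDerivAt_right
    (smoothTransition.continuous.intervalIntegrable _ _)
    (smoothTransition.continuous.stronglyMeasurableAtFilter _ _)
    smoothTransition.continuous.continuousAt

lemma contDiff_profile : ContDiff ℝ (⊤ : ℕ∞) profile := by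
  rw [contDiff_infty_iff_deriv]
  refine ⟨fun t => (hasDerivAt_profile t).differentiableAt, ?_⟩
  rw [show deriv profile = smoothTransition from funext fun t => (hasDerivAt_profile t).deriv]
  exact smoothTransition.contDiff

lemma profile_of_nonpos {t : ℝ} (ht : t ≤ 0) : profile t = 0 := by
  unfold profile
  rw [intervalIntegral.integral_congr (g := fun _ => (0 : ℝ))]
  · simp
  · intro x hx
    rw [Set.uIcc_of_ge ht] at hx
    exact smoothTransition.zero_of_nonpos hx.2

lemma profile_nonneg (t : ℝ) : 0 ≤ profile t := by
  rcases le_total t 0 with h | h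
  · rw [profile_of_nonpos h]
  · exact intervalIntegral.integral_nonneg h fun x _ => smoothTransition.nonneg x

lemma profile_le {t : ℝ} (ht : 0 ≤ t) : profile t ≤ t := by
  have := intervalIntegral.integral_mono_on (μ := volume) ht
    (smoothTransition.continuous.intervalIntegrable 0 t)
    ((continuous_const (y := (1 : ℝ))).intervalIntegrable 0 t)
    (fun x _ => smoothTransition.le_one x)
  simpa [profile] using this

lemma sub_one_le_profile (t : ℝ) : t - 1 ≤ profile t := by
  rcases le_total t 1 with h | h
  · linarith [profile_nonneg t]
  · have h1 : profile 1 + ∫ x in (1 : ℝ)..t, smoothTransition x = profile t :=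
      intervalIntegral.integral_add_adjacent_intervals
        (smoothTransition.continuous.intervalIntegrable _ _)
        (smoothTransition.continuous.intervalIntegrable _ _)
    have h2 : ∫ x in (1 : ℝ)..t, smoothTransition x = t - 1 := by
      rw [intervalIntegral.integral_congr (g := fun _ => (1 : ℝ))]
      · simp
      · intro x hx
        rw [Set.uIcc_of_le h] at hx
        exact smoothTransition.one_of_one_le hx.1
    linarith [profile_nonneg 1]

/-- The zeroth-order term of the energy is absorbed by an arbitrarily small multiple of `1 / s`. -/
lemma profile_sq_le {lam δ s : ℝ} (hlam : 0 < lam) (hδ : 0 < δ) (hs : 0 < s) :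
    lam * profile (-log s) ^ 2 ≤ δ * s⁻¹ + 64 * lam ^ 2 / δ := by
  rcases le_total 1 s with h | h
  · rw [profile_of_nonpos (by linarith [log_nonneg h])]
    have : 0 ≤ s⁻¹ := by positivity
    simp only [ne_eq, OfNat.ofNat_ne_zero, not_false_eq_true, zero_pow, mul_zero]
    positivity
  · have hl : 0 ≤ -log s := by linarith [log_nonpos hs.le h]
    set y : ℝ := s⁻¹ ^ (1 / 4 : ℝ) with hy
    have hy0 : 0 ≤ y := by positivity
    have hy4 : y ^ 4 = s⁻¹ := by
      rw [hy, ← rpow_natCast, ← rpow_mul (by positivity)]; norm_num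
    have hlog : -log s ≤ 4 * y := by
      have := log_le_rpow_div (x := s⁻¹) (by positivity) (ε := 1 / 4) (by norm_num)
      rw [log_inv] at this
      linarith
    have h1 : profile (-log s) ^ 2 ≤ (4 * y) ^ 2 :=
      pow_le_pow_left₀ (profile_nonneg _) ((profile_le hl).trans hlog) 2
    have h2 : lam * (4 * y) ^ 2 ≤ δ * y ^ 4 + 64 * lam ^ 2 / δ := by
      have : δ * y ^ 4 + 64 * lam ^ 2 / δ - lam * (4 * y) ^ 2 = (δ * y ^ 2 - 8 * lam) ^ 2 / δ := by
        field_simp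
        ring
      have h3 : 0 ≤ (δ * y ^ 2 - 8 * lam) ^ 2 / δ := by positivity
      linarith
    rw [← hy4]
    exact (mul_le_mul_of_nonneg_left h1 hlam.le).trans h2

/-! ### The periodic squared distance and the truncated logarithm -/

/-- A smooth function on the cylinder comparable to the squared distance to the origin. -/
noncomputable def cylSq (p : ℝ × ℝ) : ℝ := p.1 ^ 2 + (2 - 2 * cos p.2)

lemma sq_le_cylSq (p : ℝ × ℝ) : p.1 ^ 2 ≤ cylSq p := by
  unfold cylSq; linarith [cos_le_one p.2]

lemma cylSq_nonneg (p : ℝ × ℝ) : 0 ≤ cylSq p := (sq_nonneg _).trans (sq_le_cylSq p)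

lemma cylSq_le (p : ℝ × ℝ) : cylSq p ≤ p.1 ^ 2 + p.2 ^ 2 := by
  unfold cylSq; linarith [one_sub_sq_div_two_le_cos (x := p.2)]

lemma contDiff_cylSq : ContDiff ℝ (⊤ : ℕ∞) cylSq := by
  unfold cylSq; fun_prop

/-- The unnormalised smooth Moser function with concentration parameter `ε`. -/
noncomputable def moser (ε : ℝ) (p : ℝ × ℝ) : ℝ := profile (-log (cylSq p + ε))

lemma contDiff_moser {ε : ℝ} (hε : 0 < ε) : ContDiff ℝ (⊤ : ℕ∞) (moser ε) :=
  contDiff_profile.comp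
    ((contDiff_cylSq.add contDiff_const).log fun p => by linarith [cylSq_nonneg p]).neg

lemma neg_log_nonpos {ε : ℝ} (hε : 0 < ε) {p : ℝ × ℝ} (hp : 1 ≤ |p.1|) :
    -log (cylSq p + ε) ≤ 0 := by
  have : 1 ≤ p.1 ^ 2 := by rwa [one_le_sq_iff_one_le_abs]
  linarith [log_nonneg (show 1 ≤ cylSq p + ε by linarith [sq_le_cylSq p])]

lemma moser_eq_zero {ε : ℝ} (hε : 0 < ε) {p : ℝ × ℝ} (hp : 1 ≤ |p.1|) : moser ε p = 0 :=
  profile_of_nonpos (neg_log_nonpos hε hp)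

/-- The normalised Moser function, regarded as complex valued. -/
noncomputable def test (c ε : ℝ) (p : ℝ × ℝ) : ℂ := ((c * moser ε p : ℝ) : ℂ)

lemma contDiff_test (c : ℝ) {ε : ℝ} (hε : 0 < ε) : ContDiff ℝ (⊤ : ℕ∞) (test c ε) :=
  Complex.ofRealCLM.contDiff.comp (contDiff_const.mul (contDiff_moser hε))

lemma norm_test_sq (c ε : ℝ) (p : ℝ × ℝ) : ‖test c ε p‖ ^ 2 = c ^ 2 * moser ε p ^ 2 := by
  rw [test, Complex.norm_real, norm_eq_abs, sq_abs, mul_pow]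

lemma fderiv_test (c : ℝ) {ε : ℝ} (hε : 0 < ε) (p : ℝ × ℝ) (v : ℝ × ℝ) :
    fderiv ℝ (test c ε) p v =
      ((c * (smoothTransition (-log (cylSq p + ε)) *
        -((2 * p.1 * v.1 + 2 * sin p.2 * v.2) / (cylSq p + ε))) : ℝ) : ℂ) := by
  have hpos : cylSq p + ε ≠ 0 := by linarith [cylSq_nonneg p]
  have h1 : HasFDerivAt (fun p : ℝ × ℝ => p.1) (ContinuousLinearMap.fst ℝ ℝ ℝ) p :=
    hasFDerivAt_fst
  have h2 : HasFDerivAt (fun p : ℝ × ℝ => p.2) (ContinuousLinearMap.snd ℝ ℝ ℝ) p :=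
    hasFDerivAt_snd
  have hq : HasFDerivAt (fun p => cylSq p + ε) ((2 • p.1 ^ (2 - 1)) • .fst ℝ ℝ ℝ +
      -((2 : ℝ) • -sin p.2 • .snd ℝ ℝ ℝ)) p :=
    ((h1.pow 2).add ((h2.cos.const_mul 2).const_sub 2)).add_const ε
  have hm : HasFDerivAt (moser ε) _ p :=
    (hasDerivAt_profile _).comp_hasFDerivAt p (hq.log hpos).neg
  have ht : HasFDerivAt (test c ε) _ p :=
    Complex.ofRealCLM.hasFDerivAt.comp p (hm.const_mul c)
  rw [ht.fderiv]
  simp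
  ring

/-- The energy density of the test function. -/
noncomputable def energy (lam c ε : ℝ) (p : ℝ × ℝ) : ℝ :=
  ‖fderiv ℝ (test c ε) p (1, 0)‖ ^ 2 + ‖fderiv ℝ (test c ε) p (0, 1)‖ ^ 2 +
    lam * ‖test c ε p‖ ^ 2

lemma energy_eq (lam c : ℝ) {ε : ℝ} (hε : 0 < ε) (p : ℝ × ℝ) :
    energy lam c ε p = c ^ 2 * (smoothTransition (-log (cylSq p + ε)) ^ 2 *
      ((4 * p.1 ^ 2 + 4 * sin p.2 ^ 2) / (cylSq p + ε) ^ 2) + lam * moser ε p ^ 2) := by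
  have hpos : cylSq p + ε ≠ 0 := by linarith [cylSq_nonneg p]
  rw [energy, fderiv_test c hε, fderiv_test c hε, norm_test_sq, Complex.norm_real,
    Complex.norm_real, norm_eq_abs, norm_eq_abs, sq_abs, sq_abs]
  field_simp
  ring

lemma energy_eq_zero (lam c : ℝ) {ε : ℝ} (hε : 0 < ε) {p : ℝ × ℝ} (hp : 1 ≤ |p.1|) :
    energy lam c ε p = 0 := by
  rw [energy_eq lam c hε, moser_eq_zero hε hp,
    smoothTransition.zero_of_nonpos (neg_log_nonpos hε hp)]
  simp

lemma continuous_energy (lam c : ℝ) {ε : ℝ} (hε : 0 < ε) : Continuous (energy lam c ε) := by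
  have h : Continuous (fderiv ℝ (test c ε)) :=
    (contDiff_test c hε).continuous_fderiv (by simp)
  have h' := (contDiff_test c hε).continuous
  unfold energy
  fun_prop

/-- The integration kernel `1 / (q + ε)` dominates the energy density; this rests on
`|∇q|² = 4 w² + 4 sin² θ ≤ 4 q`. -/
lemma energy_le {lam δ : ℝ} (hlam : 0 < lam) (hδ : 0 < δ) (c : ℝ) {ε : ℝ} (hε : 0 < ε)
    (p : ℝ × ℝ) :
    energy lam c ε p ≤ c ^ 2 * ((4 + δ) * (cylSq p + ε)⁻¹ + 64 * lam ^ 2 / δ) := by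
  have hq := cylSq_nonneg p
  have hpos : 0 < cylSq p + ε := by linarith
  rw [energy_eq lam c hε]
  refine mul_le_mul_of_nonneg_left ?_ (sq_nonneg c)
  have h1 : lam * moser ε p ^ 2 ≤ δ * (cylSq p + ε)⁻¹ + 64 * lam ^ 2 / δ :=
    profile_sq_le hlam hδ hpos
  have h2 : (4 * p.1 ^ 2 + 4 * sin p.2 ^ 2) / (cylSq p + ε) ^ 2 ≤ 4 * (cylSq p + ε)⁻¹ := by
    have hg : 4 * p.1 ^ 2 + 4 * sin p.2 ^ 2 ≤ 4 * cylSq p := by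
      unfold cylSq
      nlinarith [sin_sq_add_cos_sq p.2, sq_nonneg (1 - cos p.2)]
    rw [div_le_iff₀ (by positivity)]
    have : 4 * (cylSq p + ε)⁻¹ * (cylSq p + ε) ^ 2 = 4 * (cylSq p + ε) := by field_simp
    linarith
  have h3 : smoothTransition (-log (cylSq p + ε)) ^ 2 ≤ 1 :=
    pow_le_one₀ (smoothTransition.nonneg _) (smoothTransition.le_one _)
  have h4 : smoothTransition (-log (cylSq p + ε)) ^ 2 *
      ((4 * p.1 ^ 2 + 4 * sin p.2 ^ 2) / (cylSq p + ε) ^ 2) ≤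
      (4 * p.1 ^ 2 + 4 * sin p.2 ^ 2) / (cylSq p + ε) ^ 2 :=
    mul_le_of_le_one_left (by positivity) h3
  linarith

/-! ### The integral of the kernel -/

/-- The part of the cylinder that contains the supports of the test functions. -/
def box : Set (ℝ × ℝ) := Set.Icc (-1) 1 ×ˢ Set.Ico (-π) π

lemma measurableSet_box : MeasurableSet box := measurableSet_Icc.prod measurableSet_Ico

lemma integrableOn_box {f : ℝ × ℝ → ℝ} (hf : Continuous f) : IntegrableOn f box :=
  (hf.continuousOn.integrableOn_compact (isCompact_Icc.prod isCompact_Icc)).mono_set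
    (Set.prod_mono subset_rfl Set.Ico_subset_Icc_self)

lemma integral_cylinder_eq {f : ℝ × ℝ → ℝ} (hf : ∀ p : ℝ × ℝ, 1 ≤ |p.1| → f p = 0) :
    ∫ p in Set.univ ×ˢ Set.Ico (-π) π, f p = ∫ p in box, f p := by
  refine setIntegral_eq_of_subset_of_forall_sdiff_eq_zero
    (MeasurableSet.univ.prod measurableSet_Ico)
    (Set.prod_mono (Set.subset_univ _) subset_rfl) ?_
  rintro p ⟨hp, hp'⟩
  apply hf
  by_contra! h
  exact hp' ⟨abs_le.1 h.le, hp.2⟩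

lemma volume_box : volume.real box = 4 * π := by
  rw [box, measureReal_def, Measure.volume_eq_prod, Measure.prod_prod]
  simp only [volume_Icc, volume_Ico, ENNReal.toReal_mul]
  rw [ENNReal.toReal_ofReal (by norm_num), ENNReal.toReal_ofReal (by linarith [pi_pos])]
  ring

lemma integral_inv_sq_add_le {a : ℝ} (ha : 0 < a) :
    ∫ w in Set.Icc (-1 : ℝ) 1, (w ^ 2 + a ^ 2)⁻¹ ≤ π * a⁻¹ := by
  rw [integral_Icc_eq_integral_Ioc, ← intervalIntegral.integral_of_le (by norm_num)]
  have hd : ∀ w : ℝ, HasDerivAt (fun w => a⁻¹ * arctan (w / a)) (w ^ 2 + a ^ 2)⁻¹ w := by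
    intro w
    have := ((hasDerivAt_id w).div_const a).arctan.const_mul a⁻¹
    refine this.congr_deriv ?_
    simp only [id]
    have : 0 < w ^ 2 + a ^ 2 := by positivity
    field_simp
    ring
  rw [intervalIntegral.integral_eq_sub_of_hasDerivAt (fun w _ => hd w)
    (Continuous.intervalIntegrable (Continuous.inv₀ (by fun_prop) fun w => by positivity) _ _)]
  have h1 := arctan_lt_pi_div_two (1 / a)
  have h2 := neg_pi_div_two_lt_arctan (-1 / a)
  have h3 : 0 < a⁻¹ := by positivity
  nlinarith

lemma four_sin_half_sq (θ : ℝ) : 2 - 2 * cos θ = 4 * sin (θ / 2) ^ 2 := by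
  have := cos_two_mul (θ / 2)
  rw [mul_div_cancel₀ θ two_ne_zero] at this
  linarith [sin_sq_add_cos_sq (θ / 2)]

/-- Splitting `1 = cos (θ/2) + (1 - cos (θ/2))`, where `1 - cos (θ/2) ≤ sin² (θ/2)`, isolates a
singular part with an explicit primitive. -/
lemma inv_sqrt_le {ε θ : ℝ} (hε : 0 < ε) (hθ : θ ∈ Set.Icc (-π) π) :
    (√(4 * sin (θ / 2) ^ 2 + ε))⁻¹ ≤ cos (θ / 2) * (√(4 * sin (θ / 2) ^ 2 + ε))⁻¹ + 1 / 2 := by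
  have hc : 0 ≤ cos (θ / 2) :=
    cos_nonneg_of_neg_pi_div_two_le_of_le (by linarith [hθ.1]) (by linarith [hθ.2])
  have hc1 := cos_le_one (θ / 2)
  set s := sin (θ / 2)
  set c := cos (θ / 2)
  have hsc : s ^ 2 + c ^ 2 = 1 := sin_sq_add_cos_sq (θ / 2)
  have hpos : 0 < √(4 * s ^ 2 + ε) := sqrt_pos.2 (by positivity)
  have hs : 2 * |s| ≤ √(4 * s ^ 2 + ε) :=
    le_sqrt_of_sq_le (by rw [mul_pow, sq_abs]; linarith)
  have hs1 : |s| ≤ 1 := abs_le_one_iff_mul_self_le_one.2 (by nlinarith)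
  have h : (1 - c) * (√(4 * s ^ 2 + ε))⁻¹ ≤ 1 / 2 := by
    rw [← div_eq_mul_inv, div_le_iff₀ hpos]
    have : s ^ 2 ≤ |s| := by rw [← sq_abs]; nlinarith [abs_nonneg s]
    nlinarith
  linarith

lemma two_arsinh_le {ε : ℝ} (hε : 0 < ε) (hε1 : ε ≤ 1) :
    2 * arsinh (2 / √ε) ≤ -log ε + log 25 := by
  have hs : 0 < √ε := sqrt_pos.2 hε
  have hsq : √ε ^ 2 = ε := sq_sqrt hε.le
  have h1 : 2 / √ε + √(1 + (2 / √ε) ^ 2) ≤ 5 / √ε := by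
    have : √(1 + (2 / √ε) ^ 2) ≤ 3 / √ε := by
      rw [sqrt_le_left (by positivity), div_pow, div_pow, hsq, ← sub_nonneg]
      have : 3 ^ 2 / ε - (1 + 2 ^ 2 / ε) = (5 - ε) / ε := by field_simp; ring
      rw [this]
      exact div_nonneg (by linarith) hε.le
    calc _ ≤ 2 / √ε + 3 / √ε := by linarith
      _ = 5 / √ε := by ring
  have h2 : arsinh (2 / √ε) ≤ log (5 / √ε) := log_le_log (by positivity) h1
  rw [log_div (by norm_num) hs.ne', log_sqrt hε.le] at h2
  have h3 : log 25 = 2 * log 5 := by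
    rw [show (25 : ℝ) = 5 ^ 2 by norm_num, log_pow]; norm_num
  linarith

lemma integral_inv_sqrt_le {ε : ℝ} (hε : 0 < ε) (hε1 : ε ≤ 1) :
    ∫ θ in Set.Ico (-π) π, (√(4 * sin (θ / 2) ^ 2 + ε))⁻¹ ≤ -log ε + log 25 + π := by
  have hpp : -π ≤ π := by linarith [pi_pos]
  rw [integral_Ico_eq_integral_Ioo, ← integral_Ioc_eq_integral_Ioo,
    ← intervalIntegral.integral_of_le hpp]
  have hpos : ∀ θ : ℝ, 0 < √(4 * sin (θ / 2) ^ 2 + ε) := fun θ => sqrt_pos.2 (by positivity)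
  have hcont : Continuous fun θ : ℝ => (√(4 * sin (θ / 2) ^ 2 + ε))⁻¹ :=
    Continuous.inv₀ (by fun_prop) fun θ => (hpos θ).ne'
  have hcont' : Continuous fun θ : ℝ => cos (θ / 2) * (√(4 * sin (θ / 2) ^ 2 + ε))⁻¹ + 1 / 2 := by
    fun_prop
  have hs : 0 < √ε := sqrt_pos.2 hε
  have hd : ∀ θ : ℝ, HasDerivAt (fun θ => arsinh (2 * sin (θ / 2) / √ε) + θ / 2)
      (cos (θ / 2) * (√(4 * sin (θ / 2) ^ 2 + ε))⁻¹ + 1 / 2) θ := by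
    intro θ
    have h := ((((((hasDerivAt_id θ).div_const 2).sin).const_mul 2).div_const √ε).arsinh).add
      ((hasDerivAt_id θ).div_const 2)
    refine h.congr_deriv ?_
    simp only [id, smul_eq_mul]
    have : √(4 * sin (θ / 2) ^ 2 + ε) = √ε * √(1 + (2 * sin (θ / 2) / √ε) ^ 2) := by
      rw [← sqrt_mul hε.le, div_pow, sq_sqrt hε.le]
      congr 1
      field_simp
      ring
    rw [this]
    field_simp
  calc _ ≤ ∫ θ in (-π)..π, (cos (θ / 2) * (√(4 * sin (θ / 2) ^ 2 + ε))⁻¹ + 1 / 2) :=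
        intervalIntegral.integral_mono_on hpp (hcont.intervalIntegrable _ _)
          (hcont'.intervalIntegrable _ _) fun θ hθ => inv_sqrt_le hε hθ
    _ = 2 * arsinh (2 / √ε) + π := by
        rw [intervalIntegral.integral_eq_sub_of_hasDerivAt (fun θ _ => hd θ)
          (hcont'.intervalIntegrable _ _), neg_div 2 π, sin_neg, sin_pi_div_two]
        rw [show 2 * (-1 : ℝ) / √ε = -(2 / √ε) by ring, arsinh_neg, mul_one]
        ring
    _ ≤ _ := by linarith [two_arsinh_le hε hε1]

lemma continuous_kernel {ε : ℝ} (hε : 0 < ε) : Continuous fun p => (cylSq p + ε)⁻¹ :=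
  Continuous.inv₀ (contDiff_cylSq.continuous.add continuous_const)
    fun p => by linarith [cylSq_nonneg p]

lemma integral_kernel_le {ε : ℝ} (hε : 0 < ε) (hε1 : ε ≤ 1) :
    ∫ p in box, (cylSq p + ε)⁻¹ ≤ π * (-log ε + log 25 + π) := by
  have hint : IntegrableOn (fun p => (cylSq p + ε)⁻¹) box := integrableOn_box (continuous_kernel hε)
  have hpos : ∀ θ : ℝ, 0 < √(4 * sin (θ / 2) ^ 2 + ε) := fun θ => sqrt_pos.2 (by positivity)
  rw [IntegrableOn, box, Measure.volume_eq_prod, ← Measure.prod_restrict] at hint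
  rw [box, Measure.volume_eq_prod, ← Measure.prod_restrict, integral_prod_symm _ hint]
  calc _ ≤ ∫ θ in Set.Ico (-π) π, π * (√(4 * sin (θ / 2) ^ 2 + ε))⁻¹ := by
        refine integral_mono hint.integral_prod_right ?_ fun θ => ?_
        · refine IntegrableOn.mono_set ?_ Set.Ico_subset_Icc_self
          refine ContinuousOn.integrableOn_compact isCompact_Icc (Continuous.continuousOn ?_)
          exact continuous_const.mul (Continuous.inv₀ (by fun_prop) fun θ => (hpos θ).ne')
        · refine le_trans (le_of_eq ?_) (integral_inv_sq_add_le (hpos θ))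
          refine integral_congr_ae (Filter.Eventually.of_forall fun w => ?_)
          simp only [cylSq]
          rw [sq_sqrt (by positivity), four_sin_half_sq, add_assoc]
    _ ≤ _ := by
        rw [integral_const_mul]
        exact mul_le_mul_of_nonneg_left (integral_inv_sqrt_le hε hε1) pi_pos.le

lemma integral_energy_le {lam δ : ℝ} (hlam : 0 < lam) (hδ : 0 < δ) (c : ℝ) {ε : ℝ} (hε : 0 < ε)
    (hε1 : ε ≤ 1) :
    ∫ p in Set.univ ×ˢ Set.Ico (-π) π, energy lam c ε p ≤
      c ^ 2 * ((4 + δ) * π * -log ε +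
        ((4 + δ) * π * (log 25 + π) + 64 * lam ^ 2 / δ * (4 * π))) := by
  rw [integral_cylinder_eq fun p hp => energy_eq_zero lam c hε hp]
  have hk := continuous_kernel hε
  have hi := (integrableOn_box hk).const_mul (4 + δ)
  have hc : IntegrableOn (fun _ : ℝ × ℝ => 64 * lam ^ 2 / δ) box := integrableOn_box continuous_const
  calc _ ≤ ∫ p in box, c ^ 2 * ((4 + δ) * (cylSq p + ε)⁻¹ + 64 * lam ^ 2 / δ) :=
        integral_mono (integrableOn_box (continuous_energy lam c hε))
          (integrableOn_box (by fun_prop)) fun p => energy_le hlam hδ c hε p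
    _ = c ^ 2 * ((4 + δ) * ∫ p in box, (cylSq p + ε)⁻¹) +
          c ^ 2 * (64 * lam ^ 2 / δ * (4 * π)) := by
        rw [integral_const_mul, integral_add hi hc, integral_const_mul, setIntegral_const,
          volume_box, smul_eq_mul]
        ring
    _ ≤ _ := by
        have h := mul_le_mul_of_nonneg_left (integral_kernel_le hε hε1)
          (show 0 ≤ c ^ 2 * (4 + δ) by positivity)
        linarith

/-! ### Concentration at the origin -/

lemma le_moser {ε : ℝ} (hε : 0 < ε) {p : ℝ × ℝ} (h1 : |p.1| ≤ √(ε / 2)) (h2 : |p.2| ≤ √(ε / 2)) :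
    -log ε - 2 ≤ moser ε p := by
  have hs : √(ε / 2) ^ 2 = ε / 2 := sq_sqrt (by positivity)
  have h1' : p.1 ^ 2 ≤ ε / 2 := by rw [← hs]; exact sq_le_sq' (abs_le.1 h1).1 (abs_le.1 h1).2
  have h2' : p.2 ^ 2 ≤ ε / 2 := by rw [← hs]; exact sq_le_sq' (abs_le.1 h2).1 (abs_le.1 h2).2
  have hq := cylSq_nonneg p
  have hle : log (cylSq p + ε) ≤ log (2 * ε) :=
    log_le_log (by linarith) (by linarith [cylSq_le p])
  rw [log_mul two_ne_zero hε.ne'] at hle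
  have := sub_one_le_profile (-log (cylSq p + ε))
  have := log_two_lt_d9
  unfold moser
  linarith

lemma le_integral_exp {β c ε : ℝ} (hβ : 0 < β) (hε : 0 < ε) (hε1 : ε ≤ 1) (hL : 2 ≤ -log ε) :
    2 * ε * (exp (β * (c ^ 2 * (-log ε - 2) ^ 2)) - 1) ≤
      ∫ p in Set.univ ×ˢ Set.Ico (-π) π, (exp (β * ‖test c ε p‖ ^ 2) - 1) := by
  have hcont : Continuous fun p => exp (β * ‖test c ε p‖ ^ 2) - 1 := by
    have := (contDiff_test c hε).continuous
    fun_prop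
  rw [integral_cylinder_eq fun p hp => by rw [norm_test_sq, moser_eq_zero hε hp]; simp]
  set h := √(ε / 2) with hh
  have hh0 : 0 ≤ h := sqrt_nonneg _
  have hsq : h ^ 2 = ε / 2 := sq_sqrt (by positivity)
  have hh1 : h ≤ 1 := by nlinarith
  have hsub : Set.Icc (-h) h ×ˢ Set.Icc (-h) h ⊆ box :=
    Set.prod_mono (Set.Icc_subset_Icc (by linarith) hh1)
      fun x hx => ⟨by linarith [hx.1, pi_gt_three], by linarith [hx.2, pi_gt_three]⟩
  have hvol : volume.real (Set.Icc (-h) h ×ˢ Set.Icc (-h) h) = 2 * ε := by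
    rw [measureReal_def, Measure.volume_eq_prod, Measure.prod_prod]
    simp only [volume_Icc, ENNReal.toReal_mul]
    rw [ENNReal.toReal_ofReal (by linarith)]
    nlinarith
  calc _ = ∫ p in Set.Icc (-h) h ×ˢ Set.Icc (-h) h,
        (exp (β * (c ^ 2 * (-log ε - 2) ^ 2)) - 1) := by
        rw [setIntegral_const, hvol, smul_eq_mul]
    _ ≤ ∫ p in Set.Icc (-h) h ×ˢ Set.Icc (-h) h, (exp (β * ‖test c ε p‖ ^ 2) - 1) := by
        refine setIntegral_mono_on ?_ ((integrableOn_box hcont).mono_set hsub)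
          (measurableSet_Icc.prod measurableSet_Icc) ?_
        · exact (integrableOn_box continuous_const).mono_set hsub
        · intro p hp
          have hm := le_moser hε (abs_le.2 hp.1) (abs_le.2 hp.2)
          have : (-log ε - 2) ^ 2 ≤ moser ε p ^ 2 := pow_le_pow_left₀ (by linarith) hm 2
          rw [norm_test_sq]
          gcongr
    _ ≤ _ := by
        refine setIntegral_mono_set (integrableOn_box hcont)
          (Filter.Eventually.of_forall fun p => ?_) (Filter.Eventually.of_forall hsub)
        have : 0 ≤ β * ‖test c ε p‖ ^ 2 := by positivity
        simpa using this

/-- The lower bound for the exponential integral of the normalised Moser functions is unbounded in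
`L = log (1/ε)` as soon as `β` exceeds the slope `A` of the energy. -/
lemma exists_large {A K β : ℝ} (hA : 0 < A) (hK : 0 < K) (hβ : A < β) (C : ℝ) :
    ∃ L : ℝ, 2 ≤ L ∧
      C < 2 * exp (-L) * (exp (β * ((A * L + K)⁻¹ * (L - 2) ^ 2)) - 1) := by
  set d := β - A with hd
  have hd0 : 0 < d := sub_pos.2 hβ
  -- The exponent exceeds `L + d L / (4 A)` once `d L ≥ 2 (4 β + K)` and `A L ≥ K`.
  obtain ⟨L, hL2, hL1, hLK, hLC⟩ : ∃ L : ℝ, 2 ≤ L ∧ 2 * (4 * β + K) ≤ d * L ∧ K ≤ A * L ∧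
      C < 2 * (d / (4 * A) * L) := by
    have h0 : 0 < d / (4 * A) := by positivity
    obtain ⟨L, h1, h2, h3, h4⟩ := ((Filter.eventually_ge_atTop (2 : ℝ)).and
      (((Filter.tendsto_id.const_mul_atTop hd0).eventually_ge_atTop (2 * (4 * β + K))).and
      (((Filter.tendsto_id.const_mul_atTop hA).eventually_ge_atTop K).and
      ((Filter.tendsto_id.const_mul_atTop h0).eventually_gt_atTop (C / 2))))).exists
    simp only [id] at h2 h3 h4
    exact ⟨L, h1, h2, h3, by linarith⟩
  refine ⟨L, hL2, ?_⟩
  have hβ0 : 0 < β := hA.trans hβ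
  have hE : 0 < A * L + K := by positivity
  have hexp : L + d / (4 * A) * L ≤ β * ((A * L + K)⁻¹ * (L - 2) ^ 2) := by
    have h1 : d / (4 * A) * L * (A * L + K) ≤ d / 2 * L ^ 2 := by
      calc _ ≤ d / (4 * A) * L * (A * L + A * L) := by gcongr
        _ = d / 2 * L ^ 2 := by field_simp; ring
    have h2 : L * (A * L + K) + d / 2 * L ^ 2 ≤ β * (L - 2) ^ 2 := by
      have : β = A + d := by rw [hd]; ring
      nlinarith
    rw [show β * ((A * L + K)⁻¹ * (L - 2) ^ 2) = β * (L - 2) ^ 2 / (A * L + K) by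
      rw [div_eq_mul_inv]; ring, le_div_iff₀ hE]
    linarith
  have h1 : exp L * exp (d / (4 * A) * L) ≤ exp (β * ((A * L + K)⁻¹ * (L - 2) ^ 2)) := by
    rw [← exp_add]; exact exp_le_exp.2 hexp
  have h2 : exp (-L) * exp L = 1 := by rw [← exp_add]; simp
  have h3 : exp (-L) ≤ 1 := exp_le_one_iff.2 (by linarith)
  have h4 := add_one_le_exp (d / (4 * A) * L)
  calc C < 2 * (d / (4 * A) * L) := hLC
    _ ≤ 2 * (exp (d / (4 * A) * L) - 1) := by linarith
    _ ≤ 2 * (exp (-L) * exp L * exp (d / (4 * A) * L) - exp (-L)) := by rw [h2]; linarith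
    _ = 2 * exp (-L) * (exp L * exp (d / (4 * A) * L) - 1) := by ring
    _ ≤ _ := by gcongr

/-- Sharpness of the constant `4π` in the Trudinger–Moser inequality on the
cylinder `ℝ × 𝕊¹`: for `λ > 0` and every `β > 4π`, the supremum of
`∫_{ℝ×𝕊¹} (e^{β|u|²} - 1) dw dθ` over all smooth compactly supported
(2π-periodic in `θ`) complex-valued `u` with
`∫_{ℝ×𝕊¹} (|∂_w u|² + |∂_θ u|² + λ|u|²) dw dθ ≤ 1` is infinite. -/
theorem trudinger_moser_cylinder_sharp (lam : ℝ) (hlam : 0 < lam) :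
    ∀ β > 4 * π, ∀ C : ℝ, ∃ u : ℝ × ℝ → ℂ,
      ContDiff ℝ (⊤ : ℕ∞) u ∧
      (∀ w θ : ℝ, u (w, θ + 2 * π) = u (w, θ)) ∧
      (∃ R : ℝ, ∀ p : ℝ × ℝ, R ≤ |p.1| → u p = 0) ∧
      (∫ p in Set.univ ×ˢ Set.Ico (-π) π,
          (‖fderiv ℝ u p (1, 0)‖ ^ 2 + ‖fderiv ℝ u p (0, 1)‖ ^ 2 + lam * ‖u p‖ ^ 2)) ≤ 1 ∧
      C < ∫ p in Set.univ ×ˢ Set.Ico (-π) π, (Real.exp (β * ‖u p‖ ^ 2) - 1) := by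
  intro β hβ C
  have hπ := pi_pos
  -- This `δ` makes `(4 + δ) π` the midpoint of `4 π` and `β`.
  obtain ⟨δ, hδ, hδβ⟩ : ∃ δ : ℝ, 0 < δ ∧ (4 + δ) * π < β := by
    refine ⟨(β - 4 * π) / (2 * π), div_pos (by linarith) (by linarith), ?_⟩
    have : (4 + (β - 4 * π) / (2 * π)) * π = (4 * π + β) / 2 := by field_simp; ring
    linarith
  set A := (4 + δ) * π with hA
  set K := (4 + δ) * π * (log 25 + π) + 64 * lam ^ 2 / δ * (4 * π) with hK
  have hA0 : 0 < A := by positivity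
  have hK0 : 0 < K := by
    have : 0 < log 25 := log_pos (by norm_num)
    positivity
  obtain ⟨L, hL, hCL⟩ := exists_large hA0 hK0 hδβ C
  have hE : 0 < A * L + K := by positivity
  have hε : 0 < exp (-L) := exp_pos _
  have hε1 : exp (-L) ≤ 1 := exp_le_one_iff.2 (by linarith)
  have hlog : -log (exp (-L)) = L := by rw [log_exp, neg_neg]
  have hc : (√(A * L + K))⁻¹ ^ 2 = (A * L + K)⁻¹ := by rw [inv_pow, sq_sqrt hE.le]
  refine ⟨test (√(A * L + K))⁻¹ (exp (-L)), contDiff_test _ hε, fun w θ => ?_,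
    ⟨1, fun p hp => ?_⟩, ?_, ?_⟩
  · simp [test, moser, cylSq]
  · simp [test, moser_eq_zero hε hp]
  · have h := integral_energy_le hlam hδ (√(A * L + K))⁻¹ hε hε1
    rw [hlog, hc, ← hA, ← hK, inv_mul_cancel₀ hE.ne'] at h
    exact h
  · have h := le_integral_exp (β := β) (c := (√(A * L + K))⁻¹) (hA0.trans hδβ) hε hε1
      (by rw [hlog]; exact hL)
    rw [hlog, hc] at h
    exact hCL.trans_le h
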